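/- arXiv:math/0702277 — 2 statements merged into one kernel-verified Lean document; each statement's English description precedes it below -/
import Mathlib

section
/- For every positive integer k, Σ_{σ∈S_k} ∏_{1≤i<j≤k} (q^{-1} s_{σ(i)} − q s_{σ(j)})/(s_{σ(i)} − s_{σ(j)}) = [k]_q!, as an identity of rational functions in q, s_1,…,s_k (equivalently, for every nonzero complex number q and all pairwise distinct complex numbers s_1,…,s_k). -/
/-- The q-number `[n]_q = q^{n−1} + q^{n−3} + … + q^{1−n}`. -/
noncomputable def qInt (q : ℂ) (n : ℕ) : ℂ :=
  ∑ i ∈ Finset.range n, q ^ (n - 1 - i) * q⁻¹ ^ i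

/-- The q-factorial `[k]_q! = ∏_{r=1}^k [r]_q`. -/
noncomputable def qFact (q : ℂ) (k : ℕ) : ℂ :=
  ∏ r ∈ Finset.range k, qInt q (r + 1)

/-!
The sum over `S_{n+1}` splits according to the value `p = σ 0` into `n + 1` sums, in each of which
the factors with `i = 0` come out and the rest is a sum over `S_n`, known by induction and
independent of `p`. What remains is `∑ₚ ∏_{j ≠ p} (a sₚ - b sⱼ) / (sₚ - sⱼ) = [n + 1]_q`, with
`a = q⁻¹` and `b = q`. The numerators are the values at the nodes `sₚ` of a single polynomial of
degree at most `n`, namely the `(a, b)`-derivative of `F = ∏ⱼ (X - b sⱼ)`: the twisted Leibniz rule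
applied to `F = (X - b sₚ) G` leaves only `G (a sₚ)` at `sₚ`. By Lagrange interpolation the sum is
the coefficient of `X ^ n` in that polynomial.
-/

open Finset Polynomial

section PQDerivative

variable {R : Type*}

/-- The `(a, b)`-derivative `f ↦ (f (a X) - f (b X)) / ((a - b) X)` of post-quantum calculus, used
to interpolate the numerators of the identity. The quotient is written out on coefficients, so that
`a = b` is allowed. -/
noncomputable def pqDerivative [CommSemiring R] (a b : R) (f : R[X]) : R[X] :=
  ∑ n ∈ range f.natDegree,
    monomial n (f.coeff (n + 1) * ∑ i ∈ range (n + 1), a ^ i * b ^ (n - i))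

theorem coeff_pqDerivative [CommSemiring R] (a b : R) (f : R[X]) (n : ℕ) :
    (pqDerivative a b f).coeff n =
      f.coeff (n + 1) * ∑ i ∈ range (n + 1), a ^ i * b ^ (n - i) := by
  simp only [pqDerivative, finsetSum_coeff, coeff_monomial, sum_ite_eq', mem_range,
    ite_eq_left_iff, not_lt]
  intro hn
  rw [coeff_eq_zero_of_natDegree_lt (Nat.lt_succ_of_le hn), zero_mul]

theorem degree_pqDerivative_lt [CommSemiring R] (a b : R) (f : R[X]) :
    (pqDerivative a b f).degree < f.natDegree := by
  refine (degree_lt_iff_coeff_zero _ _).2 fun n hn => ?_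
  rw [coeff_pqDerivative, coeff_eq_zero_of_natDegree_lt (Nat.lt_succ_of_le hn), zero_mul]

theorem pqDerivative_X_sub_C_mul [CommRing R] (a b c : R) (g : R[X]) :
    pqDerivative a b ((X - C c) * g) =
      g.comp (C a * X) + (C b * X - C c) * pqDerivative a b g := by
  ext n
  cases n with
  | zero => simp [coeff_pqDerivative, sub_mul, ← sub_eq_add_neg]
  | succ n =>
    simp only [coeff_pqDerivative, sub_mul, mul_assoc, coeff_add, coeff_sub, coeff_X_mul,
      coeff_C_mul, comp_C_mul_X_coeff, geom_sum₂_succ_eq a (n := n + 1), add_tsub_cancel_right]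
    ring

theorem eval_pqDerivative_nodal [CommRing R] {ι : Type*} [DecidableEq ι] (a b : R) (v : ι → R)
    {s : Finset ι} {i : ι} (hi : i ∈ s) :
    (pqDerivative a b (Lagrange.nodal s fun j => b * v j)).eval (v i) =
      ∏ j ∈ s.erase i, (a * v i - b * v j) := by
  rw [Lagrange.nodal_eq_mul_nodal_erase hi, pqDerivative_X_sub_C_mul]
  simp [Lagrange.eval_nodal]

end PQDerivative

theorem sum_prod_erase_div_sub {K ι : Type*} [Field K] [DecidableEq ι] (a b : K) {s : Finset ι}
    {v : ι → K} (hv : Set.InjOn v s) :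
    ∑ i ∈ s, ∏ j ∈ s.erase i, (a * v i - b * v j) / (v i - v j) =
      ∑ i ∈ range #s, a ^ i * b ^ (#s - 1 - i) := by
  obtain rfl | hs := s.eq_empty_or_nonempty
  · simp
  let F := Lagrange.nodal s fun j => b * v j
  have natDegree_F : F.natDegree = #s := Lagrange.natDegree_nodal
  have coeff_F : F.coeff #s = 1 := natDegree_F ▸ Lagrange.nodal_monic
  have card_sub_add : #s - 1 + 1 = #s := Nat.sub_add_cancel hs.card_pos
  calc ∑ i ∈ s, ∏ j ∈ s.erase i, (a * v i - b * v j) / (v i - v j)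
    _ = ∑ i ∈ s, (pqDerivative a b F).eval (v i) / ∏ j ∈ s.erase i, (v i - v j) :=
      sum_congr rfl fun i hi => by rw [eval_pqDerivative_nodal a b v hi, prod_div_distrib]
    _ = (pqDerivative a b F).coeff (#s - 1) :=
      (Lagrange.coeff_eq_sum hv (natDegree_F ▸ degree_pqDerivative_lt a b F)).symm
    _ = ∑ i ∈ range #s, a ^ i * b ^ (#s - 1 - i) := by
      rw [coeff_pqDerivative, card_sub_add, coeff_F, one_mul]

theorem prod_swap_zero_succ {M : Type*} [CommMonoid M] {n : ℕ} (p : Fin (n + 1))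
    (f : Fin (n + 1) → M) :
    ∏ j : Fin n, f (Equiv.swap 0 p j.succ) = ∏ j ∈ univ.erase p, f j := by
  rw [← Fin.prod_Ioi_zero fun j => f (Equiv.swap 0 p j)]
  refine prod_equiv (Equiv.swap 0 p) (fun i => ?_) fun i _ => rfl
  rw [mem_Ioi, Fin.pos_iff_ne_zero, mem_erase, ne_eq, ne_eq, Equiv.swap_apply_eq_iff,
    Equiv.swap_apply_right]
  simp only [mem_univ, and_true]

theorem sum_perm_prod_Ioi_succ {R : Type*} [CommSemiring R] {n : ℕ}
    (f : Fin (n + 1) → Fin (n + 1) → R) :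
    ∑ σ : Equiv.Perm (Fin (n + 1)), ∏ i, ∏ j ∈ Ioi i, f (σ i) (σ j) =
      ∑ p, (∏ j ∈ univ.erase p, f p j) * ∑ τ : Equiv.Perm (Fin n), ∏ i, ∏ j ∈ Ioi i,
        f (Equiv.swap 0 p (τ i).succ) (Equiv.swap 0 p (τ j).succ) := by
  have prod_first_row (p : Fin (n + 1)) (τ : Equiv.Perm (Fin n)) :
      ∏ j, f p (Equiv.swap 0 p (τ j).succ) = ∏ j ∈ univ.erase p, f p j := by
    rw [Equiv.prod_comp τ fun j => f p (Equiv.swap 0 p j.succ), prod_swap_zero_succ p (f p)]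
  rw [← Equiv.sum_comp Equiv.Perm.decomposeFin.symm, Fintype.sum_prod_type]
  simp only [Fin.prod_univ_succ, Fin.prod_Ioi_zero, Fin.prod_Ioi_succ, prod_first_row,
    Equiv.Perm.decomposeFin_symm_apply_zero, Equiv.Perm.decomposeFin_symm_apply_succ, mul_sum]

theorem q_sym_factorial_identity_general {K : Type*} [Field K] {k : ℕ} (a b : K) {s : Fin k → K}
    (hs : Function.Injective s) :
    ∑ σ : Equiv.Perm (Fin k), ∏ i : Fin k, ∏ j ∈ Ioi i,
      (a * s (σ i) - b * s (σ j)) / (s (σ i) - s (σ j)) =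
        ∏ r ∈ range k, ∑ i ∈ range (r + 1), a ^ i * b ^ (r - i) := by
  induction k with
  | zero => simp
  | succ n ih =>
    have sum_perm_tail (p : Fin (n + 1)) :=
      ih (hs.comp ((Equiv.swap 0 p).injective.comp (Fin.succ_injective n)))
    simp only [Function.comp_apply] at sum_perm_tail
    rw [sum_perm_prod_Ioi_succ fun i j => (a * s i - b * s j) / (s i - s j)]
    simp only [sum_perm_tail, ← sum_mul]
    rw [sum_prod_erase_div_sub a b hs.injOn, card_fin, add_tsub_cancel_right, prod_range_succ,
      mul_comm]

/-- For every positive integer `k`,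
`∑_{σ ∈ S_k} ∏_{1 ≤ i < j ≤ k} (q⁻¹ s_{σ(i)} − q s_{σ(j)})/(s_{σ(i)} − s_{σ(j)}) = [k]_q!`
for every nonzero complex `q` and all pairwise distinct complex numbers `s_1, …, s_k`. -/
theorem q_sym_factorial_identity (k : ℕ) (hk : 0 < k) (q : ℂ) (hq : q ≠ 0)
    (s : Fin k → ℂ) (hs : Function.Injective s) :
    ∑ σ : Equiv.Perm (Fin k), ∏ i : Fin k, ∏ j ∈ Finset.Ioi i,
      (q⁻¹ * s (σ i) - q * s (σ j)) / (s (σ i) - s (σ j)) = qFact q k := by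
  simp_rw [qFact, qInt, add_tsub_cancel_right, mul_comm (q ^ _)]
  exact q_sym_factorial_identity_general q⁻¹ q hs
end

section
/- Let N ≥ 2 and let η^1 ≥ η^2 ≥ … ≥ η^{N−1} be nonnegative integers. Then (1/η^{N−1}!) · ∏_{a=1}^{N−2} (1/(η^a − η^{a+1})!) · S̄ym^η_s( Y_η(s) ) = Σ_l S̄ym^{η̈}_{s̈}( F_l(s) ), where the sum is taken over all collections l of integers l^a_i (a = 1,…,N−2, i = 1,…,η^{a+1}) with 1 ≤ l^a_1 < l^a_2 < … < l^a_{η^{a+1}} ≤ η^a for each a. -/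
open scoped Classical

/-- `W_k(t_1,…,t_k) = ∏_{1≤i<j≤k} (t_i − t_j − 1)/(t_i − t_j)` (0-based indexing,
variables `t 0, …, t (k-1)`). -/
noncomputable def Wg (k : ℕ) (t : ℕ → ℂ) : ℂ :=
  ∏ i ∈ Finset.range k, ∏ j ∈ Finset.Ioo i k, (t i - t j - 1) / (t i - t j)

/-- The action of a tuple of permutations `σ = (σ_1, …, σ_{N−1})`,
`σ_a ∈ S_{η^a}`, on the collection of variables `s^a_i`:
the `a`-th group of variables is permuted by `σ_a`. -/
noncomputable def sPerm (N : ℕ) (η : ℕ → ℕ) (s : ℕ → ℕ → ℂ)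
    (σ : (a : Fin (N - 1)) → Equiv.Perm (Fin (η a))) : ℕ → ℕ → ℂ :=
  fun a i =>
    if h : a < N - 1 ∧ i < η a then s a ((σ ⟨a, h.1⟩ ⟨i, h.2⟩ : Fin (η a)) : ℕ)
    else s a i

/-- `Y_η(s) = ∏_{a=2}^{N−1} ∏_{j=1}^{η^a} [ (1/(s^a_j − s^{a−1}_{j+η^{a−1}−η^a})) ·
∏_{i=1}^{j−1} (s^a_i − s^{a−1}_{j+η^{a−1}−η^a} + 1)/(s^a_i − s^{a−1}_{j+η^{a−1}−η^a}) ]`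
(0-based: groups `a = 1, …, N−2`, within-group indices `0, …, η^a − 1`). -/
noncomputable def Yfun (N : ℕ) (η : ℕ → ℕ) (s : ℕ → ℕ → ℂ) : ℂ :=
  ∏ a ∈ Finset.Ico 1 (N - 1), ∏ j ∈ Finset.range (η a),
    ((s a j - s (a - 1) (j + (η (a - 1) - η a)))⁻¹ *
      ∏ i ∈ Finset.range j,
        ((s a i - s (a - 1) (j + (η (a - 1) - η a)) + 1) /
          (s a i - s (a - 1) (j + (η (a - 1) - η a)))))

/-- `F_l(s) = ∏_{a=1}^{N−2} ∏_{i=1}^{η^{a+1}} [ (1/(s^{a+1}_i − s^a_{l^a_i})) ·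
∏_{l^a_i < j ≤ η^a} (s^{a+1}_i − s^a_j + 1)/(s^{a+1}_i − s^a_j) ]`
(0-based: `a = 0, …, N−3`). -/
noncomputable def Ffun (N : ℕ) (η : ℕ → ℕ)
    (l : (a : Fin (N - 1 - 1)) → Fin (η ((a : ℕ) + 1)) → Fin (η (a : ℕ)))
    (s : ℕ → ℕ → ℂ) : ℂ :=
  ∏ a : Fin (N - 1 - 1), ∏ i : Fin (η ((a : ℕ) + 1)),
    ((s ((a : ℕ) + 1) (i : ℕ) - s (a : ℕ) ((l a i : ℕ)))⁻¹ *
      ∏ j ∈ Finset.Ioo ((l a i : ℕ)) (η (a : ℕ)),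
        ((s ((a : ℕ) + 1) (i : ℕ) - s (a : ℕ) j + 1) /
          (s ((a : ℕ) + 1) (i : ℕ) - s (a : ℕ) j)))

/-!
Write `φ(x, y) = 1 - 1 / (x - y)`, so that every factor of the weights, of `Y_η` and of `F_l` is a
value of `φ` or some `1 / (x - y)`. For two consecutive groups of variables `t` (lower) and `u`
(upper), symmetrize the factor of `Y_η` joining them over `t`, and the sum over `l` of the factors
of `F_l` joining them over `u`. Up to `(η^a - η^{a+1})!`, both symmetrizations are equal to the same
signed sum over the subsets of `u`: each satisfies a recursion, peeling off the last variable of `u`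
or the first variable of `t` respectively, which partial fractions prove for the signed sum.

The signed sum does not depend on the order of the variables. Hence in the left-hand side the
symmetrizations over the groups `1, 2, …` can be carried out one after the other, each contributing
a constant; the last group has only its weight left, which sums to a factorial. In the right-hand
side the same happens in the order `N - 1, N - 2, …`, down to the fixed first group.
-/

section Algebra

open Finset

variable {F : Type*} [Field F]

/-- The factor `φ(x, y) = (x - y - 1) / (x - y)`, which also covers the opposite shift because
`(x - y + 1) / (x - y) = φ(y, x)`. It is written as `1 - 1 / (x - y)`, so that `φ(x, x) = 1`. -/
def phi (x y : F) : F := 1 - (x - y)⁻¹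

lemma phi_eq_div {x y : F} (h : x ≠ y) : phi x y = (x - y - 1) / (x - y) := by
  rw [phi, sub_div, div_self (sub_ne_zero.2 h), one_div]

lemma phi_swap (x y : F) : phi y x = 1 + (x - y)⁻¹ := by
  rw [phi, ← neg_sub x y, inv_neg, sub_neg_eq_add]

lemma phi_swap_eq_div {x y : F} (h : x ≠ y) : phi y x = (x - y + 1) / (x - y) := by
  rw [phi_swap, add_div, div_self (sub_ne_zero.2 h), one_div]

variable [DecidableEq F]

lemma prod_one_add_mul_inv_sub (S : Finset F) (c : F → F) {z : F} (hz : z ∉ S) :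
    ∏ j ∈ S, (1 + c j * (z - j)⁻¹) =
      1 + ∑ k ∈ S, c k * (z - k)⁻¹ * ∏ i ∈ S.erase k, (1 + c i * (k - i)⁻¹) := by
  induction S using Finset.induction_on generalizing z with
  | empty => simp
  | insert m S hm ih =>
    obtain ⟨hzm, hzS⟩ : z ≠ m ∧ z ∉ S := by simpa using hz
    have residue : ∀ k ∈ S,
        c k * (z - k)⁻¹ * ∏ i ∈ (insert m S).erase k, (1 + c i * (k - i)⁻¹) =
          c k * (z - k)⁻¹ * (∏ i ∈ S.erase k, (1 + c i * (k - i)⁻¹)) * (1 + c m * (z - m)⁻¹) -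
            c m * (z - m)⁻¹ *
              (c k * (m - k)⁻¹ * ∏ i ∈ S.erase k, (1 + c i * (k - i)⁻¹)) := by
      intro k hk
      have hmk : m ≠ k := fun h => hm (h ▸ hk)
      have hzk : z ≠ k := fun h => hzS (h ▸ hk)
      have inv_mul_inv :
          (z - k)⁻¹ * (k - m)⁻¹ = (z - k)⁻¹ * (z - m)⁻¹ - (z - m)⁻¹ * (m - k)⁻¹ := by
        rw [← neg_sub m k]
        have := sub_ne_zero.2 hzk
        have := sub_ne_zero.2 hzm
        have := sub_ne_zero.2 hmk
        field_simp
        ring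
      rw [erase_insert_of_ne hmk, prod_insert (fun h => hm (mem_of_mem_erase h))]
      linear_combination (c k * c m * ∏ i ∈ S.erase k, (1 + c i * (k - i)⁻¹)) * inv_mul_inv
    rw [prod_insert hm, sum_insert hm, erase_insert hm, sum_congr rfl residue, sum_sub_distrib,
      ← sum_mul, ← mul_sum, ih hzS, ih hm]
    ring

lemma prod_phi_mul_prod_phi {T J : Finset F} (hTJ : Disjoint T J) {z : F} (hT : z ∉ T)
    (hJ : z ∉ J) :
    (∏ q ∈ T, phi q z) * ∏ j ∈ J, phi z j =
      1 + ∑ p ∈ T, (z - p)⁻¹ * (∏ q ∈ T.erase p, phi q p) * ∏ j ∈ J, phi p j -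
        ∑ k ∈ J, (z - k)⁻¹ * (∏ q ∈ T, phi q k) * ∏ j ∈ J.erase k, phi k j := by
  set c : F → F := fun x => if x ∈ T then 1 else -1 with hc
  have on_T : ∀ x, ∀ T' ⊆ T, ∏ q ∈ T', (1 + c q * (x - q)⁻¹) = ∏ q ∈ T', phi q x :=
    fun x T' h => prod_congr rfl fun q hq => by simp [hc, h hq, phi_swap]
  have notMem_T : ∀ j ∈ J, j ∉ T := fun j hj hjT => disjoint_left.1 hTJ hjT hj
  have on_J : ∀ x, ∀ J' ⊆ J, ∏ j ∈ J', (1 + c j * (x - j)⁻¹) = ∏ j ∈ J', phi x j :=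
    fun x J' h => prod_congr rfl fun j hj => by
      simp [hc, notMem_T j (h hj), phi, sub_eq_add_neg]
  have pole_T : ∀ p ∈ T,
      c p * (z - p)⁻¹ * ∏ i ∈ (T ∪ J).erase p, (1 + c i * (p - i)⁻¹) =
        (z - p)⁻¹ * (∏ q ∈ T.erase p, phi q p) * ∏ j ∈ J, phi p j := by
    intro p hp
    rw [erase_union_distrib, erase_eq_of_notMem (disjoint_left.1 hTJ hp),
      prod_union (disjoint_of_subset_left (erase_subset _ _) hTJ),
      on_T _ _ (erase_subset _ _), on_J _ _ subset_rfl]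
    simp [hc, hp, mul_assoc]
  have pole_J : ∀ k ∈ J,
      c k * (z - k)⁻¹ * ∏ i ∈ (T ∪ J).erase k, (1 + c i * (k - i)⁻¹) =
        -((z - k)⁻¹ * (∏ q ∈ T, phi q k) * ∏ j ∈ J.erase k, phi k j) := by
    intro k hk
    rw [erase_union_distrib, erase_eq_of_notMem (notMem_T k hk),
      prod_union (disjoint_of_subset_right (erase_subset _ _) hTJ),
      on_T _ _ subset_rfl, on_J _ _ (erase_subset _ _)]
    simp [hc, notMem_T k hk, mul_assoc]
  rw [← on_T z T subset_rfl, ← on_J z J subset_rfl, ← prod_union hTJ,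
    prod_one_add_mul_inv_sub _ c (by simp [hT, hJ]), sum_union hTJ, sum_congr rfl pole_T,
    sum_congr rfl pole_J, sum_neg_distrib]
  ring

lemma prod_phi_left {T : Finset F} {z : F} (hz : z ∉ T) :
    ∏ q ∈ T, phi q z = 1 + ∑ p ∈ T, (z - p)⁻¹ * ∏ q ∈ T.erase p, phi q p := by
  simpa using prod_phi_mul_prod_phi (disjoint_empty_right T) hz (notMem_empty z)

lemma prod_phi_right {J : Finset F} {z : F} (hz : z ∉ J) :
    ∏ j ∈ J, phi z j = 1 - ∑ k ∈ J, (z - k)⁻¹ * ∏ j ∈ J.erase k, phi k j := by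
  simpa using prod_phi_mul_prod_phi (disjoint_empty_left J) (notMem_empty z) hz

lemma sum_prod_erase_phi (S : Finset F) : ∑ p ∈ S, ∏ q ∈ S.erase p, phi q p = #S := by
  induction S using Finset.induction_on with
  | empty => simp
  | insert m S hm ih =>
    have split : ∀ p ∈ S, ∏ q ∈ (insert m S).erase p, phi q p =
        ∏ q ∈ S.erase p, phi q p - (m - p)⁻¹ * ∏ q ∈ S.erase p, phi q p := by
      intro p hp
      rw [erase_insert_of_ne (ne_of_mem_of_not_mem hp hm).symm,
        prod_insert (fun h => hm (mem_of_mem_erase h)), phi]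
      ring
    rw [sum_insert hm, erase_insert hm, card_insert_of_notMem hm, sum_congr rfl split,
      sum_sub_distrib, ih, prod_phi_left hm]
    push_cast
    ring

lemma sum_powerset_sum_mem {α R : Type*} [DecidableEq α] [AddCommMonoid R] (M : Finset α)
    (f : α → Finset α → R) :
    ∑ I ∈ M.powerset, ∑ k ∈ I, f k I =
      ∑ k ∈ M, ∑ I ∈ (M.erase k).powerset, f k (insert k I) := by
  have comm : ∑ I ∈ M.powerset, ∑ k ∈ I, f k I =
      ∑ k ∈ M, ∑ I ∈ M.powerset with k ∈ I, f k I :=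
    sum_comm' fun I k => by
      simp only [mem_powerset, mem_filter]
      exact ⟨fun ⟨hI, hk⟩ => ⟨⟨hI, hk⟩, hI hk⟩, fun ⟨h, _⟩ => h⟩
  rw [comm]
  refine sum_congr rfl fun k hk =>
    sum_bij' (fun I _ => I.erase k) (fun I _ => insert k I) ?_ ?_ ?_ ?_ ?_
  · intro I hI
    simp only [mem_filter, mem_powerset] at hI ⊢
    exact erase_subset_erase k hI.1
  · intro I hI
    simp only [mem_filter, mem_powerset] at hI ⊢
    exact ⟨insert_subset hk (hI.trans (erase_subset k M)), mem_insert_self k I⟩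
  · intro I hI
    exact insert_erase (mem_filter.1 hI).2
  · intro I hI
    exact erase_insert fun h => notMem_erase k M (mem_powerset.1 hI h)
  · intro I hI
    rw [insert_erase (mem_filter.1 hI).2]

lemma sum_powerset_sum_sdiff {α R : Type*} [DecidableEq α] [AddCommMonoid R] (M : Finset α)
    (f : α → Finset α → R) :
    ∑ I ∈ M.powerset, ∑ k ∈ M \ I, f k I = ∑ k ∈ M, ∑ I ∈ (M.erase k).powerset, f k I :=
  sum_comm' fun I k => by
    simp only [mem_powerset, mem_sdiff, subset_erase]
    tauto

/-- The summand of `signedSubsetSum M T` indexed by the subset `I` of `M`. -/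
def signedSubsetTerm (M T I : Finset F) : F :=
  (-1) ^ #(M \ I) * (∏ i ∈ I, ∏ q ∈ T, phi q i) * ∏ i ∈ I, ∏ j ∈ M \ I, phi i j

/-- The signed sum over subsets of `M` to which both sides of the one-level identity, with lower
variables `T` and upper variables `M`, are equal. It depends on the variables as sets only. -/
def signedSubsetSum (M T : Finset F) : F := ∑ I ∈ M.powerset, signedSubsetTerm M T I

@[simp] lemma signedSubsetSum_empty_left (T : Finset F) : signedSubsetSum ∅ T = 1 := by
  simp [signedSubsetSum, signedSubsetTerm]

lemma signedSubsetTerm_insert_right (M I : Finset F) {T : Finset F} {t : F} (ht : t ∉ T) :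
    signedSubsetTerm M (insert t T) I = (∏ i ∈ I, phi t i) * signedSubsetTerm M T I := by
  simp only [signedSubsetTerm, prod_insert ht, prod_mul_distrib]
  ring

lemma signedSubsetTerm_insert_left (T : Finset F) {M I : Finset F} {v : F} (hI : I ⊆ M)
    (hv : v ∉ M) :
    signedSubsetTerm (insert v M) T I = -((∏ i ∈ I, phi i v) * signedSubsetTerm M T I) := by
  have hvI : v ∉ M \ I := fun h => hv (mem_sdiff.1 h).1
  simp only [signedSubsetTerm, insert_sdiff_of_notMem _ (fun h => hv (hI h)),
    card_insert_of_notMem hvI, prod_insert hvI, prod_mul_distrib]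
  ring

lemma signedSubsetTerm_insert_insert (T : Finset F) {M I : Finset F} {v : F} (hI : I ⊆ M)
    (hv : v ∉ M) :
    signedSubsetTerm (insert v M) T (insert v I) =
      (∏ q ∈ T, phi q v) * (∏ j ∈ M \ I, phi v j) * signedSubsetTerm M T I := by
  rw [signedSubsetTerm, signedSubsetTerm, insert_sdiff_insert, sdiff_insert_of_notMem hv,
    prod_insert (fun h => hv (hI h)), prod_insert (fun h => hv (hI h))]
  ring

lemma signedSubsetSum_insert_right {M T : Finset F} {t : F} (hT : t ∉ T) (hM : t ∉ M) :
    signedSubsetSum M (insert t T) = signedSubsetSum M T +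
      ∑ k ∈ M, (k - t)⁻¹ * (∏ q ∈ T, phi q k) * (∏ i ∈ M.erase k, phi k i) *
        signedSubsetSum (M.erase k) T := by
  have expand : ∀ I ∈ M.powerset, signedSubsetTerm M (insert t T) I = signedSubsetTerm M T I -
      ∑ k ∈ I, (t - k)⁻¹ * (∏ i ∈ I.erase k, phi k i) * signedSubsetTerm M T I := by
    intro I hI
    rw [signedSubsetTerm_insert_right M I hT, prod_phi_right (fun h => hM (mem_powerset.1 hI h)),
      ← sum_mul]
    ring
  have residue : ∀ k ∈ M, ∀ I ∈ (M.erase k).powerset,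
      (t - k)⁻¹ * (∏ i ∈ (insert k I).erase k, phi k i) * signedSubsetTerm M T (insert k I) =
        -((k - t)⁻¹ * (∏ q ∈ T, phi q k) * (∏ i ∈ M.erase k, phi k i) *
          signedSubsetTerm (M.erase k) T I) := by
    intro k hk I hI
    have hI := mem_powerset.1 hI
    have step := signedSubsetTerm_insert_insert T hI (notMem_erase k M)
    rw [insert_erase hk] at step
    rw [step, erase_insert (fun h => notMem_erase k M (hI h)), ← prod_sdiff hI, ← neg_sub k t,
      inv_neg]
    ring
  rw [signedSubsetSum, sum_congr rfl expand, sum_sub_distrib, sum_powerset_sum_mem,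
    sum_congr rfl fun k hk => sum_congr rfl (residue k hk)]
  simp only [sum_neg_distrib, sub_neg_eq_add, signedSubsetSum, mul_sum]

lemma prod_phi_mul_signedSubsetTerm {M T I : Finset F} {p : F} (hI : I ⊆ M) (hp : p ∈ T) :
    (∏ j ∈ M \ I, phi p j) * signedSubsetTerm M T I =
      (∏ i ∈ M, phi p i) * signedSubsetTerm M (T.erase p) I := by
  rw [← prod_sdiff hI, mul_assoc, ← signedSubsetTerm_insert_right M I (notMem_erase p T),
    insert_erase hp]

lemma signedSubsetTerm_cancel (T : Finset F) {M I : Finset F} {k : F} (hI : I ⊆ M) (hk : k ∉ M) :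
    (∏ i ∈ I, phi i k) * signedSubsetTerm (insert k M) T (insert k I) +
      (∏ q ∈ T, phi q k) * (∏ j ∈ M \ I, phi k j) * signedSubsetTerm (insert k M) T I = 0 := by
  rw [signedSubsetTerm_insert_insert T hI hk, signedSubsetTerm_insert_left T hI hk]
  ring

lemma signedSubsetTerm_insert_add_insert {M T I : Finset F} {v : F} (hI : I ⊆ M) (hM : v ∉ M)
    (hT : v ∉ T) (hTM : Disjoint T M) :
    signedSubsetTerm (insert v M) T I + signedSubsetTerm (insert v M) T (insert v I) =
      ∑ p ∈ T, (v - p)⁻¹ * (∏ i ∈ M, phi p i) * (∏ q ∈ T.erase p, phi q p) *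
          signedSubsetTerm M (T.erase p) I -
        (∑ k ∈ I, (v - k)⁻¹ * ((∏ i ∈ I.erase k, phi i k) * signedSubsetTerm M T I) +
          ∑ k ∈ M \ I, (v - k)⁻¹ * ((∏ q ∈ T, phi q k) * (∏ j ∈ (M \ I).erase k, phi k j) *
            signedSubsetTerm M T I)) := by
  have remove_p : ∀ p ∈ T,
      (v - p)⁻¹ * (∏ i ∈ M, phi p i) * (∏ q ∈ T.erase p, phi q p) *
          signedSubsetTerm M (T.erase p) I =
        (v - p)⁻¹ * (∏ q ∈ T.erase p, phi q p) * (∏ j ∈ M \ I, phi p j) *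
          signedSubsetTerm M T I := by
    intro p hp
    linear_combination -(v - p)⁻¹ * (∏ q ∈ T.erase p, phi q p) *
      prod_phi_mul_signedSubsetTerm hI hp
  rw [signedSubsetTerm_insert_left T hI hM, signedSubsetTerm_insert_insert T hI hM,
    prod_phi_left (fun h => hM (hI h)),
    prod_phi_mul_prod_phi (disjoint_of_subset_right sdiff_subset hTM) hT
      (fun h => hM (mem_sdiff.1 h).1), sum_congr rfl remove_p]
  simp only [← mul_assoc, ← sum_mul]
  ring

-- The poles at `v = k` for `k ∈ M` cancel between the subsets `I` and `insert k I`; only the poles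
-- at the points of `T` survive.
lemma signedSubsetSum_insert_left {M T : Finset F} {v : F} (hM : v ∉ M) (hT : v ∉ T)
    (hTM : Disjoint T M) :
    signedSubsetSum (insert v M) T =
      ∑ p ∈ T, (v - p)⁻¹ * (∏ i ∈ M, phi p i) * (∏ q ∈ T.erase p, phi q p) *
        signedSubsetSum M (T.erase p) := by
  have cancel : ∀ k ∈ M, ∀ I ∈ (M.erase k).powerset,
      (v - k)⁻¹ * ((∏ i ∈ (insert k I).erase k, phi i k) * signedSubsetTerm M T (insert k I)) +
        (v - k)⁻¹ * ((∏ q ∈ T, phi q k) * (∏ j ∈ (M \ I).erase k, phi k j) *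
          signedSubsetTerm M T I) = 0 := by
    intro k hk I hI
    have hI := mem_powerset.1 hI
    have pair_cancel := signedSubsetTerm_cancel T hI (notMem_erase k M)
    rw [insert_erase hk] at pair_cancel
    rw [erase_insert (fun h => notMem_erase k M (hI h)), ← erase_sdiff_comm, ← mul_add,
      pair_cancel, mul_zero]
  rw [signedSubsetSum, sum_powerset_insert hM, ← sum_add_distrib,
    sum_congr rfl fun I hI =>
      signedSubsetTerm_insert_add_insert (mem_powerset.1 hI) hM hT hTM,
    sum_sub_distrib, sum_add_distrib, sum_powerset_sum_mem, sum_powerset_sum_sdiff,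
    ← sum_add_distrib, sum_eq_zero (s := M), sub_zero, sum_comm]
  · simp only [signedSubsetSum, mul_sum]
  · intro k hk
    rw [← sum_add_distrib, sum_eq_zero (cancel k hk)]

lemma signedSubsetSum_empty_right {M : Finset F} (hM : M.Nonempty) : signedSubsetSum M ∅ = 0 := by
  obtain ⟨v, hv⟩ := hM
  rw [← insert_erase hv, signedSubsetSum_insert_left (notMem_erase v M) (notMem_empty v)
    (disjoint_empty_left _), sum_empty]

end Algebra

section OneLevel

open Finset Function

lemma sum_perm_insertNth {α R : Type*} [AddCommMonoid R] {n : ℕ} (k : Fin (n + 1))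
    (t : Fin (n + 1) → α) (f : (Fin (n + 1) → α) → R) :
    ∑ σ : Equiv.Perm (Fin (n + 1)), f (t ∘ σ) =
      ∑ p, ∑ τ : Equiv.Perm (Fin n), f (k.insertNth (t p) (p.removeNth t ∘ τ)) := by
  let e : Fin (n + 1) × Equiv.Perm (Fin n) → Equiv.Perm (Fin (n + 1)) := fun x =>
    k.cycleRange.trans ((Equiv.Perm.decomposeFin.symm (0, x.2)).trans x.1.cycleRange.symm)
  have e_same : ∀ x, e x k = x.1 := by simp [e]
  have e_succAbove : ∀ x j, e x (k.succAbove j) = x.1.succAbove (x.2 j) := by simp [e]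
  have e_injective : Injective e := by
    rintro ⟨p, τ⟩ ⟨q, ρ⟩ h
    obtain rfl : p = q := by simpa only [e_same] using DFunLike.congr_fun h k
    refine Prod.ext rfl (Equiv.ext fun j => Fin.succAbove_right_injective (p := p) ?_)
    simpa only [e_succAbove] using DFunLike.congr_fun h (k.succAbove j)
  have e_bijective : Bijective e :=
    (Fintype.bijective_iff_injective_and_card e).2
      ⟨e_injective, by simp [Fintype.card_perm, Nat.factorial_succ]⟩
  rw [← Fintype.sum_prod_type', ← e_bijective.sum_comp]
  refine sum_congr rfl fun x _ => congrArg f ?_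
  rw [Fin.eq_insertNth_iff]
  exact ⟨congrArg t (e_same x), funext fun j => congrArg t (e_succAbove x j)⟩

lemma image_removeNth {α : Type*} [DecidableEq α] {n : ℕ} {t : Fin (n + 1) → α}
    (ht : Injective t) (p : Fin (n + 1)) :
    univ.image (p.removeNth t) = (univ.image t).erase (t p) := by
  rw [← image_erase ht, ← compl_singleton, ← Fin.image_succAbove_univ, image_image]
  rfl

lemma removeNth_injective {α : Type*} {n : ℕ} {t : Fin (n + 1) → α} (ht : Injective t)
    (p : Fin (n + 1)) : Injective (p.removeNth t) :=
  ht.comp Fin.succAbove_right_injective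

lemma image_eq_insert_image_tail {α : Type*} [DecidableEq α] {n : ℕ} (t : Fin (n + 1) → α) :
    univ.image t = insert (t 0) (univ.image (Fin.tail t)) := by
  rw [Fin.univ_succ, cons_eq_insert, image_insert, map_eq_image, image_image]
  rfl

lemma image_eq_insert_image_init {α : Type*} [DecidableEq α] {n : ℕ} (t : Fin (n + 1) → α) :
    univ.image t = insert (t (Fin.last n)) (univ.image (Fin.init t)) := by
  rw [Fin.univ_castSuccEmb, cons_eq_insert, image_insert, map_eq_image, image_image]
  rfl

lemma sum_strictMono_succ {R : Type*} [AddCommMonoid R] (m n : ℕ)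
    (f : (Fin (m + 1) → Fin (n + 1)) → R) :
    ∑ l with StrictMono l, f l =
      ∑ l : Fin (m + 1) → Fin n with StrictMono l, f (Fin.succ ∘ l) +
        ∑ l : Fin m → Fin n with StrictMono l, f (Fin.cons 0 (Fin.succ ∘ l)) := by
  have exists_succ_comp_eq : ∀ {k} (l : Fin k → Fin (n + 1)), (∀ i, 0 < l i) →
      ∃ l' : Fin k → Fin n, Fin.succ ∘ l' = l := fun l hl =>
    ⟨fun i => (l i).pred (hl i).ne', funext fun i => Fin.succ_pred _ _⟩
  have strictMono_succ_comp : ∀ {k} {l : Fin k → Fin n},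
      StrictMono (Fin.succ ∘ l) ↔ StrictMono l := fun {k l} =>
    ⟨fun h _ _ hij => Fin.succ_lt_succ_iff.1 (h hij), (Fin.strictMono_succ).comp⟩
  have succ_comp_injective : ∀ k, Injective fun l : Fin k → Fin n => Fin.succ ∘ l :=
    fun _ => (Fin.succ_injective n).comp_left
  rw [← sum_filter_add_sum_filter_not _ fun l => 0 < l 0]
  congr 1
  · symm
    refine sum_bij (fun l _ => Fin.succ ∘ l) ?_ (fun _ _ _ _ h => succ_comp_injective _ h) ?_
      fun _ _ => rfl
    · intro l hl
      simpa [strictMono_succ_comp] using hl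
    · intro l hl
      obtain ⟨hl, h0⟩ : StrictMono l ∧ 0 < l 0 := by simpa using hl
      obtain ⟨l', rfl⟩ := exists_succ_comp_eq l fun i => h0.trans_le (hl.monotone (Fin.zero_le i))
      exact ⟨l', by simpa [strictMono_succ_comp] using hl, rfl⟩
  · symm
    refine sum_bij (fun l _ => Fin.cons 0 (Fin.succ ∘ l)) ?_
      (fun _ _ _ _ h => succ_comp_injective _ (Fin.cons_right_injective _ h)) ?_ fun _ _ => rfl
    · intro l hl
      simpa [Fin.strictMono_cons, strictMono_succ_comp] using hl
    · intro l hl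
      obtain ⟨hl, h0⟩ : StrictMono l ∧ l 0 = 0 := by simpa using hl
      rw [← Fin.cons_self_tail l, h0, Fin.strictMono_cons] at hl
      obtain ⟨l', hl'⟩ := exists_succ_comp_eq (Fin.tail l) hl.1
      refine ⟨l', ?_, ?_⟩
      · rw [mem_filter, ← strictMono_succ_comp, hl']
        exact ⟨mem_univ _, hl.2⟩
      · rw [hl', ← h0, Fin.cons_self_tail]

variable {F : Type*} [Field F]

/-- The weight `W_n` of the weighted symmetrization. -/
def symWeight {n : ℕ} (t : Fin n → F) : F := ∏ i, ∏ j ∈ Ioi i, phi (t i) (t j)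

lemma symWeight_cons {n : ℕ} (a : F) (t : Fin n → F) :
    symWeight (Fin.cons a t : Fin (n + 1) → F) = (∏ j, phi a (t j)) * symWeight t := by
  simp [symWeight, Fin.prod_univ_succ, Fin.prod_Ioi_succ]

lemma symWeight_snoc {n : ℕ} (t : Fin n → F) (a : F) :
    symWeight (Fin.snoc t a : Fin (n + 1) → F) = symWeight t * ∏ i, phi (t i) a := by
  have swap : ∀ {k} (u : Fin k → F), symWeight u = ∏ j, ∏ i ∈ Iio j, phi (u i) (u j) :=
    fun u => prod_comm' (by simp)
  rw [swap, swap, Fin.prod_univ_castSucc]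
  simp [Fin.prod_Iio_castSucc, Fin.Iio_last_eq_map]

/-- The factor of `Y_η` that joins two consecutive groups of variables `t` and `u`. -/
def chainTerm {m n : ℕ} (h : m ≤ n) (t : Fin n → F) (u : Fin m → F) : F :=
  ∏ j : Fin m, ((u j - t ⟨j + (n - m), by omega⟩)⁻¹ *
    ∏ i ∈ Iio j, phi (t ⟨j + (n - m), by omega⟩) (u i))

/-- The factor of `F_l` that joins two consecutive groups of variables `t` and `u`. -/
def selectionTerm {m n : ℕ} (l : Fin m → Fin n) (t : Fin n → F) (u : Fin m → F) : F :=
  ∏ i, ((u i - t (l i))⁻¹ * ∏ j ∈ Ioi (l i), phi (t j) (u i))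

lemma chainTerm_snoc {m n : ℕ} (h : m + 1 ≤ n + 1) (t : Fin n → F) (a : F) (u : Fin (m + 1) → F) :
    chainTerm h (Fin.snoc t a : Fin (n + 1) → F) u =
      chainTerm (Nat.le_of_succ_le_succ h) t (Fin.init u) *
        ((u (Fin.last m) - a)⁻¹ * ∏ i, phi a (Fin.init u i)) := by
  have index_castSucc : ∀ j : Fin m,
      (Fin.snoc t a : Fin (n + 1) → F) ⟨j.castSucc + (n + 1 - (m + 1)), by simp; omega⟩ =
        t ⟨j + (n - m), by omega⟩ := fun j => by
    rw [← Fin.snoc_castSucc (α := fun _ => F) a t]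
    congr 1
    ext
    simp
  have index_last : (⟨Fin.last m + (n + 1 - (m + 1)), by simp; omega⟩ : Fin (n + 1)) =
      Fin.last n := by
    ext
    simp
    omega
  rw [chainTerm, Fin.prod_univ_castSucc, index_last]
  simp only [index_castSucc]
  simp [chainTerm, Fin.prod_Iio_castSucc, Fin.Iio_last_eq_map, Fin.init]

lemma selectionTerm_succ_comp {m n : ℕ} (l : Fin m → Fin n) (t : Fin (n + 1) → F) (u : Fin m → F) :
    selectionTerm (Fin.succ ∘ l) t u = selectionTerm l (Fin.tail t) u := by
  simp [selectionTerm, Fin.prod_Ioi_succ, Fin.tail]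

lemma selectionTerm_cons_zero {m n : ℕ} (l : Fin m → Fin n) (t : Fin (n + 1) → F) (a : F)
    (u : Fin m → F) :
    selectionTerm (Fin.cons 0 (Fin.succ ∘ l) : Fin (m + 1) → Fin (n + 1)) t (Fin.cons a u) =
      (a - t 0)⁻¹ * (∏ j, phi (Fin.tail t j) a) * selectionTerm l (Fin.tail t) u := by
  rw [← selectionTerm_succ_comp]
  simp [selectionTerm, Fin.prod_univ_succ, Fin.tail]

/-- The weighted symmetrization of `chainTerm h t u` over the variables `t`. -/
def chainSym {m n : ℕ} (h : m ≤ n) (t : Fin n → F) (u : Fin m → F) : F :=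
  ∑ σ : Equiv.Perm (Fin n), chainTerm h (t ∘ σ) u * symWeight (t ∘ σ)

/-- The weighted symmetrization, over the variables `u`, of the sum of `selectionTerm l t u` over
all selections `l 0 < l 1 < ⋯`. -/
def selectionSym {m n : ℕ} (t : Fin n → F) (u : Fin m → F) : F :=
  ∑ τ : Equiv.Perm (Fin m),
    (∑ l : Fin m → Fin n with StrictMono l, selectionTerm l t (u ∘ τ)) * symWeight (u ∘ τ)

lemma selectionSym_zero {n : ℕ} (t : Fin n → F) (u : Fin 0 → F) : selectionSym t u = 1 := by
  simp [selectionSym, selectionTerm, symWeight, filter_true_of_mem, Subsingleton.strictMono]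

lemma prod_removeNth_comp_perm [DecidableEq F] {n : ℕ} {t : Fin (n + 1) → F} (ht : Injective t)
    (p : Fin (n + 1)) (τ : Equiv.Perm (Fin n)) (f : F → F) :
    ∏ i, f ((p.removeNth t ∘ τ) i) = ∏ q ∈ (univ.image t).erase (t p), f q := by
  rw [← image_removeNth ht, prod_image (removeNth_injective ht p).injOn]
  exact Equiv.prod_comp τ fun i => f (p.removeNth t i)

theorem sum_perm_symWeight {n : ℕ} {t : Fin n → F} (ht : Injective t) :
    ∑ σ : Equiv.Perm (Fin n), symWeight (t ∘ σ) = n.factorial := by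
  induction n with
  | zero => simp [symWeight]
  | succ n ih =>
    have peel : ∀ p, ∑ τ : Equiv.Perm (Fin n),
        symWeight (Fin.snoc (p.removeNth t ∘ τ) (t p) : Fin (n + 1) → F) =
          n.factorial * ∏ q ∈ (univ.image t).erase (t p), phi q (t p) := by
      intro p
      simp only [symWeight_snoc, prod_removeNth_comp_perm ht p _ fun q => phi q (t p)]
      rw [← sum_mul, ih (removeNth_injective ht p)]
    rw [sum_perm_insertNth (Fin.last n)]
    simp only [Fin.insertNth_last', peel]
    rw [← mul_sum, ← sum_image (f := fun x => ∏ q ∈ (univ.image t).erase x, phi q x) ht.injOn,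
      sum_prod_erase_phi, card_image_of_injective _ ht]
    simp [Nat.factorial_succ, mul_comm]

lemma chainSym_succ [DecidableEq F] {m n : ℕ} (h : m + 1 ≤ n + 1) {t : Fin (n + 1) → F}
    (ht : Injective t) (u : Fin (m + 1) → F) :
    chainSym h t u = ∑ p, (u (Fin.last m) - t p)⁻¹ * (∏ i, phi (t p) (Fin.init u i)) *
      (∏ q ∈ (univ.image t).erase (t p), phi q (t p)) *
        chainSym (Nat.le_of_succ_le_succ h) (p.removeNth t) (Fin.init u) := by
  rw [chainSym, sum_perm_insertNth (Fin.last n) t fun t => chainTerm h t u * symWeight t]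
  refine sum_congr rfl fun p _ => ?_
  rw [chainSym, mul_sum]
  refine sum_congr rfl fun τ _ => ?_
  rw [Fin.insertNth_last', chainTerm_snoc, symWeight_snoc,
    prod_removeNth_comp_perm ht p τ fun q => phi q (t p)]
  ring

lemma selectionSym_succ [DecidableEq F] {m n : ℕ} (t : Fin (n + 1) → F) {u : Fin (m + 1) → F}
    (hu : Injective u) :
    selectionSym t u = selectionSym (Fin.tail t) u +
      ∑ p, (u p - t 0)⁻¹ * (∏ j, phi (Fin.tail t j) (u p)) *
        (∏ i ∈ (univ.image u).erase (u p), phi (u p) i) *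
          selectionSym (Fin.tail t) (p.removeNth u) := by
  simp only [selectionSym, sum_strictMono_succ, add_mul, sum_add_distrib,
    selectionTerm_succ_comp]
  congr 1
  rw [sum_perm_insertNth 0 u fun u => (∑ l : Fin m → Fin n with StrictMono l,
    selectionTerm (Fin.cons 0 (Fin.succ ∘ l) : Fin (m + 1) → Fin (n + 1)) t u) * symWeight u]
  refine sum_congr rfl fun p _ => ?_
  rw [mul_sum]
  refine sum_congr rfl fun τ _ => ?_
  simp only [Fin.insertNth_zero', selectionTerm_cons_zero, ← mul_sum]
  rw [symWeight_cons, prod_removeNth_comp_perm hu p τ fun i => phi (u p) i]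
  ring

theorem chainSym_eq [DecidableEq F] {m n : ℕ} (h : m ≤ n) {t : Fin n → F} {u : Fin m → F}
    (ht : Injective t) (hu : Injective u) (hut : ∀ i j, u i ≠ t j) :
    chainSym h t u = (n - m).factorial * signedSubsetSum (univ.image u) (univ.image t) := by
  induction m generalizing n with
  | zero => simp [chainSym, chainTerm, sum_perm_symWeight ht]
  | succ m ih =>
    obtain ⟨n, rfl⟩ := Nat.exists_eq_add_of_le' (Nat.one_le_of_lt h)
    have init_injective : Injective (Fin.init u) := hu.comp (Fin.castSucc_injective m)
    have last_notMem_init : u (Fin.last m) ∉ univ.image (Fin.init u) := by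
      simpa [Fin.init] using fun i => hu.ne (Fin.castSucc_lt_last i).ne
    have last_notMem : u (Fin.last m) ∉ univ.image t := by
      simpa [eq_comm] using hut (Fin.last m)
    have disjoint_init : Disjoint (univ.image t) (univ.image (Fin.init u)) := by
      simpa [disjoint_left, Fin.init] using fun j i => hut (Fin.castSucc i) j
    have removed : ∀ p, chainSym (Nat.le_of_succ_le_succ h) (p.removeNth t) (Fin.init u) =
        (n - m).factorial *
          signedSubsetSum (univ.image (Fin.init u)) ((univ.image t).erase (t p)) := fun p => by
      rw [ih _ (removeNth_injective ht p) init_injective fun i j => hut _ _, image_removeNth ht]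
    rw [chainSym_succ h ht, image_eq_insert_image_init u,
      signedSubsetSum_insert_left last_notMem_init last_notMem disjoint_init, mul_sum,
      sum_image ht.injOn, Nat.add_sub_add_right]
    refine sum_congr rfl fun p _ => ?_
    rw [removed, prod_image init_injective.injOn]
    ring

theorem selectionSym_eq [DecidableEq F] {m n : ℕ} {t : Fin n → F} {u : Fin m → F}
    (ht : Injective t) (hu : Injective u) (hut : ∀ i j, u i ≠ t j) :
    selectionSym t u = signedSubsetSum (univ.image u) (univ.image t) := by
  induction n generalizing m with
  | zero =>
    cases m with
    | zero => simp [selectionSym_zero]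
    | succ m =>
      rw [univ_eq_empty (α := Fin 0), image_empty,
        signedSubsetSum_empty_right (univ_nonempty.image u)]
      simp [selectionSym]
  | succ n ih =>
    cases m with
    | zero => simp [selectionSym_zero]
    | succ m =>
      have tail_injective : Injective (Fin.tail t) := ht.comp (Fin.succ_injective n)
      have zero_notMem_tail : t 0 ∉ univ.image (Fin.tail t) := by
        simpa [Fin.tail] using fun i => ht.ne (Fin.succ_ne_zero i)
      have zero_notMem : t 0 ∉ univ.image u := by simpa using fun i => hut i 0
      have removed : ∀ p, selectionSym (Fin.tail t) (p.removeNth u) =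
          signedSubsetSum ((univ.image u).erase (u p)) (univ.image (Fin.tail t)) := fun p => by
        rw [ih tail_injective (removeNth_injective hu p) fun i j => hut _ _, image_removeNth hu]
      rw [selectionSym_succ t hu, image_eq_insert_image_tail t,
        signedSubsetSum_insert_right zero_notMem_tail zero_notMem, sum_image hu.injOn,
        ih tail_injective hu fun i j => hut _ _]
      refine congrArg _ (sum_congr rfl fun p _ => ?_)
      rw [removed, prod_image tail_injective.injOn]

theorem chainSym_eq_factorial_mul_selectionSym {m n : ℕ} (h : m ≤ n) {t : Fin n → F}
    {u : Fin m → F} (ht : Injective t) (hu : Injective u) (hut : ∀ i j, u i ≠ t j) :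
    chainSym h t u = (n - m).factorial * selectionSym t u := by
  rw [chainSym_eq h ht hu hut, selectionSym_eq ht hu hut]

lemma image_comp_perm {α : Type*} [DecidableEq α] {n : ℕ} (t : Fin n → α)
    (σ : Equiv.Perm (Fin n)) : univ.image (t ∘ σ) = univ.image t := by
  rw [← image_image, image_univ_equiv]

lemma chainSym_comp_perm {m n : ℕ} (h : m ≤ n) {t : Fin n → F} {u : Fin m → F}
    (ht : Injective t) (hu : Injective u) (hut : ∀ i j, u i ≠ t j) (σ : Equiv.Perm (Fin m)) :
    chainSym h t (u ∘ σ) = chainSym h t u := by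
  rw [chainSym_eq h ht (hu.comp σ.injective) fun i => hut _, chainSym_eq h ht hu hut,
    image_comp_perm]

lemma selectionSym_comp_perm {m n : ℕ} {t : Fin n → F} {u : Fin m → F}
    (ht : Injective t) (hu : Injective u) (hut : ∀ i j, u i ≠ t j) (σ : Equiv.Perm (Fin n)) :
    selectionSym (t ∘ σ) u = selectionSym t u := by
  rw [selectionSym_eq (ht.comp σ.injective) hu fun i j => hut i _, selectionSym_eq ht hu hut,
    image_comp_perm]

end OneLevel

section Chain

open Finset

variable {R : Type*} [CommSemiring R]

lemma sum_chain_mul_last {K : ℕ} {A : Fin (K + 1) → Type*} [∀ a, Fintype (A a)]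
    (f : ∀ a : Fin K, A a.castSucc → A a.succ → R) (g : A (Fin.last K) → R) (c : Fin K → R)
    (hf : ∀ a y, ∑ x, f a x y = c a) :
    ∑ σ : ∀ a, A a, (∏ a : Fin K, f a (σ a.castSucc) (σ a.succ)) * g (σ (Fin.last K)) =
      (∏ a, c a) * ∑ x, g x := by
  induction K with
  | zero =>
    rw [← (Fin.consEquiv A).sum_comp, Fintype.sum_prod_type]
    simp
  | succ K ih =>
    have tail_sum := ih (A := fun a => A a.succ) (fun a => f a.succ) g (fun a => c a.succ)
      fun a => hf a.succ
    rw [← (Fin.consEquiv A).sum_comp, Fintype.sum_prod_type_right, Fin.prod_univ_succ, mul_assoc]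
    refine Eq.trans ?_ (congrArg (c 0 * ·) tail_sum)
    rw [mul_sum]
    refine sum_congr rfl fun σ _ => ?_
    rw [← hf 0 (σ 0), sum_mul]
    refine sum_congr rfl fun x _ => ?_
    rw [Fin.prod_univ_succ, mul_assoc]
    rfl

lemma sum_head_mul_chain {K : ℕ} {A : Fin (K + 1) → Type*} [∀ a, Fintype (A a)]
    (f : ∀ a : Fin K, A a.castSucc → A a.succ → R) (g : A 0 → R) (c : Fin K → R)
    (hf : ∀ a x, ∑ y, f a x y = c a) :
    ∑ σ : ∀ a, A a, g (σ 0) * ∏ a : Fin K, f a (σ a.castSucc) (σ a.succ) =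
      (∑ x, g x) * ∏ a, c a := by
  induction K with
  | zero =>
    rw [← (Fin.consEquiv A).sum_comp, Fintype.sum_prod_type]
    simp
  | succ K ih =>
    have tail_sum := ih (A := fun a => A a.succ) (fun a => f a.succ)
      (fun y => ∑ x, g x * f 0 x y) (fun a => c a.succ) fun a => hf a.succ
    have head_sum : ∑ y, ∑ x, g x * f 0 x y = (∑ x, g x) * c 0 := by
      rw [sum_comm, sum_mul]
      exact sum_congr rfl fun x _ => (mul_sum ..).symm.trans (congrArg (g x * ·) (hf 0 x))
    rw [← (Fin.consEquiv A).sum_comp, Fintype.sum_prod_type_right, Fin.prod_univ_succ,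
      ← mul_assoc, ← head_sum]
    refine Eq.trans (sum_congr rfl fun σ _ => ?_) tail_sum
    rw [sum_mul]
    refine sum_congr rfl fun x _ => ?_
    rw [Fin.prod_univ_succ, ← mul_assoc]
    rfl

lemma sum_chain_of_head_eq {K : ℕ} {A : Fin (K + 1) → Type*} [∀ a, Fintype (A a)]
    [DecidableEq (A 0)]
    (f : ∀ a : Fin K, A a.castSucc → A a.succ → R) (c : Fin K → R)
    (hf : ∀ a x, ∑ y, f a x y = c a) (x₀ : A 0) :
    ∑ σ : ∀ a, A a with σ 0 = x₀, ∏ a : Fin K, f a (σ a.castSucc) (σ a.succ) = ∏ a, c a := by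
  simpa [sum_filter] using sum_head_mul_chain f (fun x => if x = x₀ then 1 else 0) c hf

end Chain

section Groups

open Finset Function

/-- The `a`-th group of variables `s^a_1, …, s^a_{η^a}` as a tuple. -/
def levelVars (η : ℕ → ℕ) (s : ℕ → ℕ → ℂ) (a : ℕ) : Fin (η a) → ℂ := fun i => s a i

variable {K : ℕ} {η : ℕ → ℕ} {s : ℕ → ℕ → ℂ}

lemma levelVars_sPerm (s : ℕ → ℕ → ℂ) (σ : ∀ a : Fin (K + 1), Equiv.Perm (Fin (η a)))
    (a : Fin (K + 1)) :
    levelVars η (sPerm (K + 2) η s σ) a = levelVars η s a ∘ σ a := by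
  funext i
  simp [levelVars, sPerm, Fin.is_le]

lemma Wg_eq_symWeight {a : ℕ} (hs : Injective (levelVars η s a)) :
    Wg (η a) (fun i => s a i) = symWeight (levelVars η s a) := by
  rw [Wg, prod_range, symWeight]
  refine prod_congr rfl fun i _ => ?_
  rw [← Fin.map_valEmbedding_Ioi, prod_map]
  refine prod_congr rfl fun j hj => ?_
  exact (phi_eq_div (hs.ne (mem_Ioi.1 hj).ne)).symm

lemma Yfun_eq_prod_chainTerm (hη : ∀ a : Fin K, η a.succ ≤ η a.castSucc)
    (hcross : ∀ (a : Fin K) i j, levelVars η s a.succ i ≠ levelVars η s a.castSucc j) :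
    Yfun (K + 2) η s =
      ∏ a : Fin K, chainTerm (hη a) (levelVars η s a.castSucc) (levelVars η s a.succ) := by
  rw [Yfun, prod_Ico_eq_prod_range, prod_range]
  refine prod_congr rfl fun a _ => ?_
  rw [add_comm 1 (a : ℕ), Nat.add_sub_cancel, prod_range]
  refine prod_congr rfl fun j _ => ?_
  rw [← Nat.Iio_eq_range, ← Fin.map_valEmbedding_Iio, prod_map]
  refine congrArg _ (prod_congr rfl fun i _ => ?_)
  rw [phi_swap_eq_div (hcross a i _)]
  rfl

lemma Ffun_eq_prod_selectionTerm (l : ∀ a : Fin K, Fin (η (a + 1)) → Fin (η a))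
    (hcross : ∀ (a : Fin K) i j, levelVars η s a.succ i ≠ levelVars η s a.castSucc j) :
    Ffun (K + 2) η l s =
      ∏ a : Fin K, selectionTerm (l a) (levelVars η s a.castSucc) (levelVars η s a.succ) := by
  refine prod_congr rfl fun a _ => prod_congr rfl fun i _ => congrArg _ ?_
  rw [← Fin.map_valEmbedding_Ioi, prod_map]
  exact prod_congr rfl fun j _ => (phi_swap_eq_div (hcross a i j)).symm

lemma levelVars_sPerm_injective (hs : ∀ a : Fin (K + 1), Injective (levelVars η s a))
    (σ : ∀ a : Fin (K + 1), Equiv.Perm (Fin (η a))) (a : Fin (K + 1)) :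
    Injective (levelVars η (sPerm (K + 2) η s σ) a) := by
  rw [levelVars_sPerm]
  exact (hs a).comp (σ a).injective

lemma levelVars_sPerm_ne
    (hcross : ∀ (a : Fin K) i j, levelVars η s a.succ i ≠ levelVars η s a.castSucc j)
    (σ : ∀ a : Fin (K + 1), Equiv.Perm (Fin (η a))) (a : Fin K) (i : Fin (η a.succ))
    (j : Fin (η a.castSucc)) :
    levelVars η (sPerm (K + 2) η s σ) a.succ i ≠
      levelVars η (sPerm (K + 2) η s σ) a.castSucc j := by
  rw [levelVars_sPerm, levelVars_sPerm]
  exact hcross a _ _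

theorem sum_perm_Yfun (hη : ∀ a : Fin K, η a.succ ≤ η a.castSucc)
    (hs : ∀ a : Fin (K + 1), Injective (levelVars η s a))
    (hcross : ∀ (a : Fin K) i j, levelVars η s a.succ i ≠ levelVars η s a.castSucc j) :
    ∑ σ : ∀ a : Fin (K + 1), Equiv.Perm (Fin (η a)), Yfun (K + 2) η (sPerm (K + 2) η s σ) *
        ∏ a ∈ range (K + 1), Wg (η a) (fun i => sPerm (K + 2) η s σ a i) =
      (∏ a : Fin K, chainSym (hη a) (levelVars η s a.castSucc) (levelVars η s a.succ)) *
        (η K).factorial := by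
  refine Eq.trans (sum_congr rfl fun σ _ => ?_)
    ((sum_chain_mul_last (A := fun a : Fin (K + 1) => Equiv.Perm (Fin (η a)))
      (fun a x y => chainTerm (hη a) (levelVars η s a.castSucc ∘ x) (levelVars η s a.succ ∘ y) *
        symWeight (levelVars η s a.castSucc ∘ x))
      (fun x => symWeight (levelVars η s (Fin.last K) ∘ x)) _
      fun a => chainSym_comp_perm (hη a) (hs a.castSucc) (hs a.succ) (hcross a)).trans
        (congrArg _ (sum_perm_symWeight (hs (Fin.last K)))))
  have weight : ∀ a : Fin (K + 1), Wg (η a) (fun i => sPerm (K + 2) η s σ a i) =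
      symWeight (levelVars η s a ∘ σ a) := fun a => by
    rw [Wg_eq_symWeight (levelVars_sPerm_injective hs σ a), levelVars_sPerm]
  rw [Yfun_eq_prod_chainTerm hη (levelVars_sPerm_ne hcross σ), prod_range]
  simp only [weight, levelVars_sPerm]
  rw [Fin.prod_univ_castSucc, ← mul_assoc, prod_mul_distrib]

theorem sum_perm_Ffun (hs : ∀ a : Fin (K + 1), Injective (levelVars η s a))
    (hcross : ∀ (a : Fin K) i j, levelVars η s a.succ i ≠ levelVars η s a.castSucc j) :
    ∑ l : ∀ a : Fin K, Fin (η (a + 1)) → Fin (η a) with ∀ a, StrictMono (l a),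
      ∑ σ : ∀ a : Fin (K + 1), Equiv.Perm (Fin (η a)) with σ 0 = 1,
        Ffun (K + 2) η l (sPerm (K + 2) η s σ) *
          ∏ a ∈ Ico 1 (K + 1), Wg (η a) (fun i => sPerm (K + 2) η s σ a i) =
      ∏ a : Fin K, selectionSym (levelVars η s a.castSucc) (levelVars η s a.succ) := by
  rw [sum_comm, ← sum_chain_of_head_eq (A := fun a : Fin (K + 1) => Equiv.Perm (Fin (η a)))
      (fun a x y => (∑ l : Fin (η a.succ) → Fin (η a.castSucc) with StrictMono l,
        selectionTerm l (levelVars η s a.castSucc ∘ x) (levelVars η s a.succ ∘ y)) *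
          symWeight (levelVars η s a.succ ∘ y)) _ (fun a x =>
      selectionSym_comp_perm (hs a.castSucc) (hs a.succ) (hcross a) x) 1]
  refine sum_congr rfl fun σ _ => ?_
  have weight : ∀ a : Fin K, Wg (η (1 + a)) (fun i => sPerm (K + 2) η s σ (1 + a) i) =
      symWeight (levelVars η s a.succ ∘ σ a.succ) := fun a => by
    rw [add_comm]
    refine (Wg_eq_symWeight (levelVars_sPerm_injective hs σ a.succ)).trans ?_
    rw [levelVars_sPerm]
  simp only [Ffun_eq_prod_selectionTerm _ (levelVars_sPerm_ne hcross σ), levelVars_sPerm]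
  rw [← sum_mul, prod_mul_distrib, prod_univ_sum, prod_Ico_eq_prod_range,
    Nat.add_sub_cancel, prod_range]
  simp only [weight]
  congr 1
  refine sum_congr ?_ fun _ _ => rfl
  ext l
  simp

theorem sum_perm_Yfun_eq_mul_prod_selectionSym (hη : ∀ a : Fin K, η a.succ ≤ η a.castSucc)
    (hs : ∀ a : Fin (K + 1), Injective (levelVars η s a))
    (hcross : ∀ (a : Fin K) i j, levelVars η s a.succ i ≠ levelVars η s a.castSucc j) :
    ∑ σ : ∀ a : Fin (K + 1), Equiv.Perm (Fin (η a)), Yfun (K + 2) η (sPerm (K + 2) η s σ) *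
        ∏ a ∈ range (K + 1), Wg (η a) (fun i => sPerm (K + 2) η s σ a i) =
      (η K).factorial * (∏ a ∈ range K, ((η a - η (a + 1)).factorial : ℂ)) *
        ∏ a : Fin K, selectionSym (levelVars η s a.castSucc) (levelVars η s a.succ) := by
  have one_level : ∀ a : Fin K,
      chainSym (hη a) (levelVars η s a.castSucc) (levelVars η s a.succ) =
        (η a - η (a + 1)).factorial *
          selectionSym (levelVars η s a.castSucc) (levelVars η s a.succ) := fun a =>
    chainSym_eq_factorial_mul_selectionSym (hη a) (hs a.castSucc) (hs a.succ) (hcross a)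
  rw [sum_perm_Yfun hη hs hcross, prod_congr rfl fun a _ => one_level a, prod_mul_distrib,
    ← prod_range fun a => ((η a - η (a + 1)).factorial : ℂ)]
  ring

end Groups

/-- Lemma FlY:
`(1/η^{N−1}!) · ∏_{a=1}^{N−2} 1/(η^a − η^{a+1})! · S̄ym^η_s(Y_η(s)) = ∑_l S̄ym^{η̈}_{s̈}(F_l(s))`,
the sum over all collections `l` with `1 ≤ l^a_1 < … < l^a_{η^{a+1}} ≤ η^a`.
Here `S̄ym^η_s` sums over all tuples of permutations of the `N−1` groups of variables, with
weight `∏_a W_{η^a}`, and `S̄ym^{η̈}_{s̈}` only over the groups `a = 2, …, N−1`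
(encoded by requiring the first permutation to be the identity), with weight
`∏_{a≥2} W_{η^a}`. -/
theorem FlY_identity (N : ℕ) (hN : 2 ≤ N) (η : ℕ → ℕ)
    (hmono : ∀ a, a + 1 < N - 1 → η (a + 1) ≤ η a)
    (s : ℕ → ℕ → ℂ)
    (hinj : ∀ a < N - 1, ∀ i < η a, ∀ j < η a, i ≠ j → s a i ≠ s a j)
    (hcross : ∀ a, 1 ≤ a → a < N - 1 → ∀ i < η a, ∀ j < η (a - 1), s a i ≠ s (a - 1) j) :
    (1 / (Nat.factorial (η (N - 2)) : ℂ)) *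
      (∏ a ∈ Finset.range (N - 2), (1 / (Nat.factorial (η a - η (a + 1)) : ℂ))) *
      (∑ σ : (a : Fin (N - 1)) → Equiv.Perm (Fin (η a)),
        Yfun N η (sPerm N η s σ) *
          ∏ a ∈ Finset.range (N - 1), Wg (η a) (fun i => sPerm N η s σ a i)) =
    ∑ l ∈ Finset.univ.filter
        (fun l : (a : Fin (N - 1 - 1)) → Fin (η ((a : ℕ) + 1)) → Fin (η (a : ℕ)) =>
          ∀ a, StrictMono (l a)),
      ∑ σ ∈ Finset.univ.filter
          (fun σ : (a : Fin (N - 1)) → Equiv.Perm (Fin (η a)) =>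
            σ ⟨0, by omega⟩ = 1),
        Ffun N η l (sPerm N η s σ) *
          ∏ a ∈ Finset.Ico 1 (N - 1), Wg (η a) (fun i => sPerm N η s σ a i) := by
  obtain ⟨K, rfl⟩ := Nat.exists_eq_add_of_le' hN
  have levelVars_injective : ∀ a : Fin (K + 1), Function.Injective (levelVars η s a) :=
    fun a i j h => Fin.ext (not_imp_not.1 (hinj a a.2 i i.2 j j.2) h)
  have levelVars_ne : ∀ (a : Fin K) i j, levelVars η s a.succ i ≠ levelVars η s a.castSucc j :=
    fun a i j => hcross (a + 1) (Nat.le_add_left 1 a) a.succ.2 i i.2 j j.2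
  have factorial_ne_zero : ∀ n : ℕ, (n.factorial : ℂ) ≠ 0 := fun n =>
    Nat.cast_ne_zero.2 n.factorial_ne_zero
  have prod_factorial_ne_zero :
      ∏ a ∈ Finset.range K, ((η a - η (a + 1)).factorial : ℂ) ≠ 0 :=
    Finset.prod_ne_zero_iff.2 fun a _ => factorial_ne_zero _
  calc
    _ = _ := congrArg _ (sum_perm_Yfun_eq_mul_prod_selectionSym (fun a => hmono a a.succ.2)
      levelVars_injective levelVars_ne)
    _ = ∏ a : Fin K, selectionSym (levelVars η s a.castSucc) (levelVars η s a.succ) := by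
      simp only [Nat.add_sub_cancel, one_div, Finset.prod_inv_distrib]
      field_simp [factorial_ne_zero, prod_factorial_ne_zero]
    _ = _ := (sum_perm_Ffun levelVars_injective levelVars_ne).symm
end
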